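/- Presentation Theorem (group algebra case). Let k be a commutative ring, G a group, and σ : G × G → kˣ a two-cocycle. Let T = k⟨x₁,…,x_n⟩ be the free associative k-algebra on n generators, graded by G with each x_j homogeneous of degree g_j ∈ G. Let (p_i)_{i∈I} be a family of elements of T whose k-span is a G-graded k-submodule of T, let A = T/(p_i)_{i∈I} (a G-graded k-algebra), and let (B, φ) be a σ-twist of A. Define the k-linear map κ : T → T by κ(1) = σ(1,1)·1, κ(x_j) = x_j, and, for r ≥ 2, κ(x_{i₁}x_{i₂}⋯x_{i_r}) = σ(g_{i₁},g_{i₂})⁻¹·σ(g_{i₁}g_{i₂},g_{i₃})⁻¹ ⋯ σ(g_{i₁}g_{i₂}⋯g_{i_{r−1}},g_{i_r})⁻¹ · x_{i₁}x_{i₂}⋯x_{i_r}. Then there is a k-algebra isomorphism T/(κ(p_i))_{i∈I} ≅ B sending the class of x_j to φ(x̄_j), where x̄_j denotes the class of x_j in A. Moreover, if G is abelian and the relation x_i x_j = x_j x_i holds in A for some i ≠ j, then in B one has φ(x̄_i)·φ(x̄_j) = σ(g_i,g_j)·σ(g_j,g_i)⁻¹ · φ(x̄_j)·φ(x̄_i).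 -/

import Mathlib

section

variable {k : Type*} [CommRing k] {G : Type*} [Group G] {n : ℕ}

/-- A two-cocycle on a group `G` with values in `kˣ`. -/
def IsTwoCocycle (σ : G → G → kˣ) : Prop :=
  ∀ g h l, σ g h * σ (g * h) l = σ h l * σ g (h * l)

/-- The monomial of the free algebra `k⟨x₁,…,x_n⟩` associated to a word. -/
def freeMonomial (k : Type*) [CommRing k] {n : ℕ} (w : List (Fin n)) :
    FreeAlgebra k (Fin n) :=
  (w.map (FreeAlgebra.ι k)).prod

/-- The `G`-degree of a word, for generators of degrees `gdeg`. -/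
def wordDeg (gdeg : Fin n → G) (w : List (Fin n)) : G := (w.map gdeg).prod

/-- The `G`-grading on the free algebra `k⟨x₁,…,x_n⟩` in which `x_j` is homogeneous
of degree `gdeg j`: the piece of degree `g` is spanned by the words of degree `g`. -/
def freeGrading (k : Type*) [CommRing k] (gdeg : Fin n → G) (g : G) :
    Submodule k (FreeAlgebra k (Fin n)) :=
  Submodule.span k {x | ∃ w : List (Fin n), wordDeg gdeg w = g ∧ x = freeMonomial k w}

/-- The scalar `σ(g, g_{j₁})⁻¹ · σ(g·g_{j₁}, g_{j₂})⁻¹ ⋯` by which the twisting map `κ`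
rescales the monomial `x_{i} x_{j₁} ⋯ x_{j_r}`, where `g` is the degree of `x_i`. -/
def kappaCoef (σ : G → G → kˣ) (gdeg : Fin n → G) : G → List (Fin n) → kˣ
  | _, [] => 1
  | g, j :: w => (σ g (gdeg j))⁻¹ * kappaCoef σ gdeg (g * gdeg j) w

/-- The relation on `k⟨x₁,…,x_n⟩` identifying each `p i` with `0`. -/
def presentationRel {I : Type*} (p : I → FreeAlgebra k (Fin n)) :
    FreeAlgebra k (Fin n) → FreeAlgebra k (Fin n) → Prop :=
  fun a b => (∃ i, a = p i) ∧ b = 0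

/-!
The map `κ` exhibits the free algebra `T` as a `σ`-twist of itself. Any twist map `κ` of a graded
algebra satisfies `κ(P * Q) = κ(P) * κ(Q)` for *graded* submodules `P`, `Q`, because on homogeneous
pieces it is multiplicative up to units; so it carries the ideal `T * N * T` generated by a graded
submodule `N` to the ideal generated by `κ(N)`. Hence, with `q : T → A` and `q' : T → T/(κ(p))` the
projections, `φ ∘ q` and `q' ∘ κ` are surjective twist maps of `T` with the same kernel, and
comparing them on products of homogeneous elements shows that `κ(t) ↦ φ(q(t))` induces an
isomorphism of algebras.
-/

section TwistMap

variable {ι : Type*} {T A B C : Type*} [Ring T] [Algebra k T] [Ring A] [Algebra k A]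
  [Ring B] [Algebra k B] [Ring C] [Algebra k C]

/-- A submodule `N` is graded with respect to a family `𝒜` of submodules if it is spanned by its
homogeneous elements. The family `𝒜` is not required to be independent. -/
def IsGradedSubmodule (𝒜 : ι → Submodule k T) (N : Submodule k T) : Prop :=
  N = ⨆ g, N ⊓ 𝒜 g

/-- A `k`-linear map `f` out of a graded algebra is a `σ`-twist map if
`f a * f b = σ(g, h) f (a * b)` for `a`, `b` homogeneous of degrees `g`, `h`. A `σ`-twist of the
algebra is the target of a bijective one. -/
def IsTwistMap (σ : ι → ι → kˣ) (𝒜 : ι → Submodule k T) (f : T →ₗ[k] B) : Prop :=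
  ∀ (g h : ι) (a b : T), a ∈ 𝒜 g → b ∈ 𝒜 h → f a * f b = (σ g h : k) • f (a * b)

variable {σ : ι → ι → kˣ} {𝒜 : ι → Submodule k T} {N P Q : Submodule k T}

theorem isGradedSubmodule_of_le_iSup (h : N ≤ ⨆ g, N ⊓ 𝒜 g) : IsGradedSubmodule 𝒜 N :=
  h.antisymm (iSup_le fun _ => inf_le_left)

theorem isGradedSubmodule_top (htop : ⨆ g, 𝒜 g = ⊤) : IsGradedSubmodule 𝒜 ⊤ := by
  simp [IsGradedSubmodule, htop]

theorem IsGradedSubmodule.mul [Mul ι] (hP : IsGradedSubmodule 𝒜 P)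
    (hmul : ∀ g h, 𝒜 g * 𝒜 h ≤ 𝒜 (g * h)) (hQ : IsGradedSubmodule 𝒜 Q) :
    IsGradedSubmodule 𝒜 (P * Q) := by
  refine isGradedSubmodule_of_le_iSup ?_
  calc P * Q = ⨆ g, ⨆ h, (P ⊓ 𝒜 g) * (Q ⊓ 𝒜 h) := by
        conv_lhs => rw [hP, hQ, Submodule.iSup_mul]
        simp only [Submodule.mul_iSup]
    _ ≤ ⨆ g, P * Q ⊓ 𝒜 g := iSup₂_le fun g h => le_iSup_of_le (g * h) <|
        le_inf (mul_le_mul' inf_le_left inf_le_left)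
          ((mul_le_mul' inf_le_right inf_le_right).trans (hmul g h))

namespace IsTwistMap

variable {f : T →ₗ[k] B}

theorem map_mul_eq_inv_smul (hf : IsTwistMap σ 𝒜 f) {g h : ι} {a b : T} (ha : a ∈ 𝒜 g)
    (hb : b ∈ 𝒜 h) : f (a * b) = ((σ g h)⁻¹ : kˣ) • (f a * f b) := by
  rw [hf g h a b ha hb, ← Units.smul_def, inv_smul_smul]

theorem mul_eq_smul_mul_of_commute (hf : IsTwistMap σ 𝒜 f) {g h : ι} {a b : T} (ha : a ∈ 𝒜 g)
    (hb : b ∈ 𝒜 h) (hab : Commute a b) :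
    f a * f b = ((σ g h * (σ h g)⁻¹ : kˣ) : k) • (f b * f a) := by
  rw [hf g h a b ha hb, hf h g b a hb ha, hab.eq, smul_smul, ← Units.val_mul,
    inv_mul_cancel_right]

theorem comp_algHom {q : T →ₐ[k] A} {φ : A →ₗ[k] B}
    (hφ : IsTwistMap σ (fun g => (𝒜 g).map q.toLinearMap) φ) :
    IsTwistMap σ 𝒜 (φ ∘ₗ q.toLinearMap) := by
  intro g h a b ha hb
  simpa using hφ g h (q a) (q b) (Submodule.mem_map_of_mem ha) (Submodule.mem_map_of_mem hb)

theorem algHom_comp (hf : IsTwistMap σ 𝒜 f) (q : B →ₐ[k] C) :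
    IsTwistMap σ 𝒜 (q.toLinearMap ∘ₗ f) := by
  intro g h a b ha hb
  simpa using congrArg q (hf g h a b ha hb)

theorem submodule_map_mul_of_le (hf : IsTwistMap σ 𝒜 f) {g h : ι} (hP : P ≤ 𝒜 g) (hQ : Q ≤ 𝒜 h) :
    (P * Q).map f = P.map f * Q.map f := by
  apply le_antisymm
  · rw [Submodule.map_le_iff_le_comap, Submodule.mul_le]
    intro a ha b hb
    rw [Submodule.mem_comap, hf.map_mul_eq_inv_smul (hP ha) (hQ hb)]
    exact Submodule.smul_mem _ _ (Submodule.mul_mem_mul (Submodule.mem_map_of_mem ha)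
      (Submodule.mem_map_of_mem hb))
  · rw [Submodule.mul_le]
    rintro _ ⟨a, ha, rfl⟩ _ ⟨b, hb, rfl⟩
    rw [hf g h a b (hP ha) (hQ hb)]
    exact Submodule.smul_mem _ _ (Submodule.mem_map_of_mem (Submodule.mul_mem_mul ha hb))

theorem submodule_map_mul (hf : IsTwistMap σ 𝒜 f) (hP : IsGradedSubmodule 𝒜 P)
    (hQ : IsGradedSubmodule 𝒜 Q) : (P * Q).map f = P.map f * Q.map f := by
  rw [hP, hQ]
  simp only [Submodule.iSup_mul, Submodule.mul_iSup, Submodule.map_iSup]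
  exact iSup_congr fun g => iSup_congr fun h => hf.submodule_map_mul_of_le inf_le_right inf_le_right

theorem submodule_map_top_mul_mul_top [Mul ι] (hf : IsTwistMap σ 𝒜 f)
    (hsurj : Function.Surjective f) (hmul : ∀ g h, 𝒜 g * 𝒜 h ≤ 𝒜 (g * h))
    (htop : ⨆ g, 𝒜 g = ⊤) (hN : IsGradedSubmodule 𝒜 N) :
    (⊤ * N * ⊤).map f = ⊤ * N.map f * ⊤ := by
  have hT := isGradedSubmodule_top htop
  rw [hf.submodule_map_mul (hT.mul hmul hN) hT, hf.submodule_map_mul hT hN, Submodule.map_top,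
    LinearMap.range_eq_top.2 hsurj]

theorem exists_algEquiv_of_ker_eq {f' : T →ₗ[k] C} (hf : IsTwistMap σ 𝒜 f)
    (hf' : IsTwistMap σ 𝒜 f') (hsurj : Function.Surjective f) (hsurj' : Function.Surjective f')
    (hker : LinearMap.ker f' = LinearMap.ker f) (htop : ⨆ g, 𝒜 g = ⊤) :
    ∃ ψ : C ≃ₐ[k] B, ∀ t, ψ (f' t) = f t := by
  let e : C ≃ₗ[k] B := (f'.quotKerEquivOfSurjective hsurj').symm ≪≫ₗ
    Submodule.quotEquivOfEq _ _ hker ≪≫ₗ f.quotKerEquivOfSurjective hsurj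
  have he (t : T) : e (f' t) = f t := by
    have : (f'.quotKerEquivOfSurjective hsurj').symm (f' t) = Submodule.Quotient.mk t :=
      (LinearEquiv.symm_apply_eq _).2 rfl
    simp [e, this]
  have he_mul (s t : T) : e (f' s * f' t) = f s * f t := by
    have hs : s ∈ ⨆ g, 𝒜 g := htop ▸ Submodule.mem_top
    have ht : t ∈ ⨆ g, 𝒜 g := htop ▸ Submodule.mem_top
    induction hs using Submodule.iSup_induction' with
    | zero => simp
    | add s₁ s₂ _ _ h₁ h₂ => simp only [map_add, add_mul, h₁, h₂]
    | mem g a ha =>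
      induction ht using Submodule.iSup_induction' with
      | zero => simp
      | add t₁ t₂ _ _ h₁ h₂ => simp only [map_add, mul_add, h₁, h₂]
      | mem h b hb => rw [hf' g h a b ha hb, map_smul, he, hf g h a b ha hb]
  have hmul : ∀ x y, e (x * y) = e x * e y := hsurj'.forall₂.2 fun s t => by
    rw [he_mul, he, he]
  exact ⟨AlgEquiv.ofLinearEquiv e (map_one (MulEquiv.mk e.toEquiv hmul)) hmul, he⟩

theorem of_span {s : ι → Set T} (h : ∀ g h, ∀ a ∈ s g, ∀ b ∈ s h,
    f a * f b = (σ g h : k) • f (a * b)) :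
    IsTwistMap σ (fun g => Submodule.span k (s g)) f := by
  intro i j a b ha hb
  induction ha, hb using Submodule.span_induction₂ with
  | mem_mem a b ha hb => exact h i j a ha b hb
  | zero_left => simp
  | zero_right => simp
  | add_left _ _ _ _ _ _ h₁ h₂ => simp only [map_add, add_mul, smul_add, h₁, h₂]
  | add_right _ _ _ _ _ _ h₁ h₂ => simp only [map_add, mul_add, smul_add, h₁, h₂]
  | smul_left c _ _ _ _ h => simp only [map_smul, smul_mul_assoc, h, smul_comm c]
  | smul_right c _ _ _ _ h => simp only [map_smul, mul_smul_comm, h, smul_comm c]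

end IsTwistMap

/-- The twist of a quotient is the quotient of the twist: here `T'` is the `σ`-twist of `T`,
`B` is that of `A = T/(N)`, and `A' = T'/(κ(N))`. -/
theorem presentation_theorem_group_algebra_case_general [Mul ι]
    {T' A' : Type*} [Ring T'] [Algebra k T'] [Ring A'] [Algebra k A']
    (hmul : ∀ g h, 𝒜 g * 𝒜 h ≤ 𝒜 (g * h)) (htop : ⨆ g, 𝒜 g = ⊤)
    (hN : IsGradedSubmodule 𝒜 N)
    {κ : T →ₗ[k] T'} (hκ : IsTwistMap σ 𝒜 κ) (hκbij : Function.Bijective κ)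
    {q : T →ₐ[k] A} (hq : Function.Surjective q)
    (hqker : LinearMap.ker q.toLinearMap = ⊤ * N * ⊤)
    {q' : T' →ₐ[k] A'} (hq' : Function.Surjective q')
    (hqker' : LinearMap.ker q'.toLinearMap = ⊤ * N.map κ * ⊤)
    (φ : A ≃ₗ[k] B) (hφ : IsTwistMap σ (fun g => (𝒜 g).map q.toLinearMap) φ.toLinearMap) :
    (∃ ψ : A' ≃ₐ[k] B, ∀ t, ψ (q' (κ t)) = φ (q t)) ∧
    ∀ {g h : ι} {a b : T}, a ∈ 𝒜 g → b ∈ 𝒜 h → Commute (q a) (q b) →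
      φ (q a) * φ (q b) = ((σ g h * (σ h g)⁻¹ : kˣ) : k) • (φ (q b) * φ (q a)) := by
  have hker : LinearMap.ker (q'.toLinearMap ∘ₗ κ) =
      LinearMap.ker (φ.toLinearMap ∘ₗ q.toLinearMap) := by
    rw [LinearMap.ker_comp, hqker',
      ← hκ.submodule_map_top_mul_mul_top hκbij.surjective hmul htop hN,
      Submodule.comap_map_eq_of_injective hκbij.injective, LinearEquiv.ker_comp, hqker]
  exact ⟨hφ.comp_algHom.exists_algEquiv_of_ker_eq (hκ.algHom_comp q') (φ.surjective.comp hq)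
      (hq'.comp hκbij.surjective) hker htop,
    fun ha hb hab => hφ.mul_eq_smul_mul_of_commute (Submodule.mem_map_of_mem ha)
      (Submodule.mem_map_of_mem hb) hab⟩

end TwistMap

section Kernel

variable {R : Type*} [Ring R] [Algebra k R]

theorem mem_top_mul_mul_top_of_mem_span {s : Set R} {x : R} (hx : x ∈ TwoSidedIdeal.span s) :
    x ∈ (⊤ * Submodule.span k s * ⊤ : Submodule k R) := by
  rw [TwoSidedIdeal.mem_span_iff_mem_addSubgroup_closure] at hx
  refine (AddSubgroup.closure_le
    (⊤ * Submodule.span k s * ⊤ : Submodule k R).toAddSubgroup).2 ?_ hx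
  rintro _ ⟨_, ⟨a, -, b, hb, rfl⟩, c, -, rfl⟩
  exact Submodule.mul_mem_mul
    (Submodule.mul_mem_mul Submodule.mem_top (Submodule.subset_span hb)) Submodule.mem_top

theorem mem_span_of_mkRingHom_eq_zero {r : R → R → Prop} {x : R}
    (hx : RingQuot.mkRingHom r x = 0) : x ∈ TwoSidedIdeal.span {y | ∃ a b, r a b ∧ a - b = y} := by
  set J := TwoSidedIdeal.span {y | ∃ a b, r a b ∧ a - b = y}
  have hr : ∀ ⦃a b⦄, r a b → J.ringCon.mk' a = J.ringCon.mk' b := fun a b hab =>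
    (RingCon.eq _).2 ((J.rel_iff a b).2 (TwoSidedIdeal.subset_span ⟨a, b, hab, rfl⟩))
  have hx' : J.ringCon.mk' x = 0 := by
    rw [← RingQuot.lift_mkRingHom_apply J.ringCon.mk' hr, hx, map_zero]
  exact (J.mem_iff x).2 ((RingCon.eq _).1 hx')

theorem ker_mkAlgHom (r : R → R → Prop) :
    LinearMap.ker (RingQuot.mkAlgHom k r).toLinearMap =
      ⊤ * Submodule.span k {y | ∃ a b, r a b ∧ a - b = y} * ⊤ := by
  apply le_antisymm
  · intro x hx
    refine mem_top_mul_mul_top_of_mem_span (mem_span_of_mkRingHom_eq_zero ?_)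
    rwa [← RingQuot.mkAlgHom_coe k r]
  · have hspan : Submodule.span k {y | ∃ a b, r a b ∧ a - b = y} ≤
        LinearMap.ker (RingQuot.mkAlgHom k r).toLinearMap := by
      rw [Submodule.span_le]
      rintro _ ⟨a, b, hab, rfl⟩
      simp [RingQuot.mkAlgHom_rel k hab]
    refine Submodule.mul_le.2 fun x hx c _ => ?_
    have hx0 : RingQuot.mkAlgHom k r x = 0 := by
      induction hx using Submodule.mul_induction_on' with
      | mem_mul_mem a _ b hb =>
        have hb0 : RingQuot.mkAlgHom k r b = 0 := hspan hb
        rw [map_mul, hb0, mul_zero]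
      | add a _ b _ ha hb => rw [map_add, ha, hb, add_zero]
    simp [hx0]

theorem ker_mkAlgHom_presentationRel {I : Type*} (p : I → FreeAlgebra k (Fin n)) :
    LinearMap.ker (RingQuot.mkAlgHom k (presentationRel p)).toLinearMap =
      ⊤ * Submodule.span k (Set.range p) * ⊤ := by
  have hrange : {y | ∃ a b, presentationRel p a b ∧ a - b = y} = Set.range p := by
    ext y
    simp [presentationRel, eq_comm]
  rw [ker_mkAlgHom, hrange]

end Kernel

theorem bijective_of_apply_basis_eq_smul {R ι V : Type*} [Semiring R] [AddCommMonoid V]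
    [Module R V] (b : Module.Basis ι R V) {f : V →ₗ[R] V} (c : ι → Rˣ)
    (hf : ∀ i, f (b i) = c i • b i) : Function.Bijective f := by
  have : f = (b.equiv (b.unitsSMul c) (Equiv.refl ι)).toLinearMap := b.ext fun i => by
    simp [hf, Module.Basis.unitsSMul_apply]
  exact this ▸ (b.equiv (b.unitsSMul c) (Equiv.refl ι)).bijective

section FreeAlgebra

variable (gdeg : Fin n → G)

theorem freeMonomial_append (u w : List (Fin n)) :
    freeMonomial k (u ++ w) = freeMonomial k u * freeMonomial k w := by
  simp [freeMonomial]

theorem freeMonomial_singleton (i : Fin n) : freeMonomial k [i] = FreeAlgebra.ι k i := by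
  simp [freeMonomial]

theorem basisFreeMonoid_apply (w : List (Fin n)) :
    FreeAlgebra.basisFreeMonoid k (Fin n) (FreeMonoid.ofList w) = freeMonomial k w := by
  simp [FreeAlgebra.basisFreeMonoid, FreeAlgebra.equivMonoidAlgebraFreeMonoid, freeMonomial,
    FreeMonoid.lift_apply]

theorem wordDeg_append (u w : List (Fin n)) :
    wordDeg gdeg (u ++ w) = wordDeg gdeg u * wordDeg gdeg w := by
  simp [wordDeg]

theorem freeMonomial_mem_freeGrading (w : List (Fin n)) :
    freeMonomial k w ∈ freeGrading k gdeg (wordDeg gdeg w) :=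
  Submodule.subset_span ⟨w, rfl, rfl⟩

theorem ι_mem_freeGrading (j : Fin n) : FreeAlgebra.ι k j ∈ freeGrading k gdeg (gdeg j) :=
  Submodule.subset_span ⟨[j], by simp [wordDeg], (freeMonomial_singleton j).symm⟩

theorem freeGrading_mul_le (g h : G) :
    freeGrading k gdeg g * freeGrading k gdeg h ≤ freeGrading k gdeg (g * h) := by
  rw [freeGrading, freeGrading, Submodule.span_mul_span]
  refine Submodule.span_mono ?_
  rintro _ ⟨_, ⟨u, rfl, rfl⟩, _, ⟨w, rfl, rfl⟩, rfl⟩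
  exact ⟨u ++ w, wordDeg_append gdeg u w, (freeMonomial_append u w).symm⟩

theorem iSup_freeGrading : ⨆ g, freeGrading k gdeg g = ⊤ := by
  rw [eq_top_iff, ← (FreeAlgebra.basisFreeMonoid k (Fin n)).span_eq, Submodule.span_le]
  rintro _ ⟨w, rfl⟩
  exact le_iSup (freeGrading k gdeg) _
    (basisFreeMonoid_apply (k := k) w.toList ▸ freeMonomial_mem_freeGrading gdeg w.toList)

end FreeAlgebra

section Kappa

variable {σ : G → G → kˣ} (gdeg : Fin n → G)

theorem IsTwoCocycle.one_left (hσ : IsTwoCocycle σ) (g : G) : σ 1 g = σ 1 1 := by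
  have h := hσ 1 1 g
  rw [one_mul, one_mul, mul_comm (σ 1 g)] at h
  exact (mul_right_cancel h).symm

theorem IsTwoCocycle.one_right (hσ : IsTwoCocycle σ) (g : G) : σ g 1 = σ 1 1 := by
  have h := hσ g 1 1
  rw [mul_one, mul_one] at h
  exact mul_right_cancel h

theorem kappaCoef_append (σ : G → G → kˣ) (g : G) (u w : List (Fin n)) :
    kappaCoef σ gdeg g (u ++ w) =
      kappaCoef σ gdeg g u * kappaCoef σ gdeg (g * wordDeg gdeg u) w := by
  induction u generalizing g with
  | nil => simp [kappaCoef, wordDeg]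
  | cons j u ih => simp [kappaCoef, ih, wordDeg, mul_assoc]

theorem IsTwoCocycle.kappaCoef_mul (hσ : IsTwoCocycle σ) (g h : G) (w : List (Fin n)) :
    kappaCoef σ gdeg (g * h) w * σ g (h * wordDeg gdeg w) = kappaCoef σ gdeg h w * σ g h := by
  induction w generalizing h with
  | nil => simp [kappaCoef, wordDeg]
  | cons j w ih =>
    have hdeg : h * wordDeg gdeg (j :: w) = h * gdeg j * wordDeg gdeg w := by
      simp [wordDeg, mul_assoc]
    have hcocycle : σ g (h * gdeg j) = (σ h (gdeg j))⁻¹ * (σ g h * σ (g * h) (gdeg j)) :=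
      eq_inv_mul_of_mul_eq (hσ g h (gdeg j)).symm
    rw [kappaCoef, kappaCoef, hdeg, mul_assoc, mul_assoc g h, ih, hcocycle, inv_mul_eq_iff_eq_mul]
    ac_rfl

/-- The scalar by which `κ` rescales the monomial of a word `w`, the empty word included:
`σ(1, 1)` times `kappaCoef` started at degree `1`. -/
def wordScalar (σ : G → G → kˣ) (gdeg : Fin n → G) (w : List (Fin n)) : kˣ :=
  σ 1 1 * kappaCoef σ gdeg 1 w

theorem IsTwoCocycle.wordScalar_cons (hσ : IsTwoCocycle σ) (i : Fin n) (w : List (Fin n)) :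
    wordScalar σ gdeg (i :: w) = kappaCoef σ gdeg (gdeg i) w := by
  simp [wordScalar, kappaCoef, hσ.one_left (gdeg i)]

theorem IsTwoCocycle.wordScalar_mul (hσ : IsTwoCocycle σ) (u w : List (Fin n)) :
    wordScalar σ gdeg u * wordScalar σ gdeg w =
      σ (wordDeg gdeg u) (wordDeg gdeg w) * wordScalar σ gdeg (u ++ w) := by
  have hshift := hσ.kappaCoef_mul gdeg (wordDeg gdeg u) 1 w
  rw [mul_one, one_mul, hσ.one_right] at hshift
  rw [wordScalar, wordScalar, wordScalar, kappaCoef_append, one_mul, mul_assoc (σ 1 1),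
    mul_comm (σ 1 1) (kappaCoef σ gdeg 1 w), ← hshift]
  ac_rfl

variable {gdeg} {κ : FreeAlgebra k (Fin n) →ₗ[k] FreeAlgebra k (Fin n)}

theorem isTwistMap_of_map_freeMonomial (hσ : IsTwoCocycle σ)
    (hκ : ∀ w, κ (freeMonomial k w) = wordScalar σ gdeg w • freeMonomial k w) :
    IsTwistMap σ (freeGrading k gdeg) κ := by
  refine IsTwistMap.of_span ?_
  rintro _ _ _ ⟨u, rfl, rfl⟩ _ ⟨w, rfl, rfl⟩
  rw [← freeMonomial_append, hκ, hκ, hκ, smul_mul_smul_comm, ← freeMonomial_append,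
    hσ.wordScalar_mul, mul_smul, Units.smul_def]

theorem bijective_of_map_freeMonomial {c : List (Fin n) → kˣ}
    (hκ : ∀ w, κ (freeMonomial k w) = c w • freeMonomial k w) : Function.Bijective κ :=
  bijective_of_apply_basis_eq_smul (FreeAlgebra.basisFreeMonoid k (Fin n)) (c ·.toList) fun w => by
    simpa [← basisFreeMonoid_apply] using hκ w.toList

end Kappa

/-- Presentation Theorem, group algebra case.  Let `σ` be a two-cocycle
of a group `G` with values in `kˣ`, let `T = k⟨x₁,…,x_n⟩` be `G`-graded with `x_j`
homogeneous of degree `gdeg j`, let `(p i)` be a family of elements of `T` whose span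
is a graded submodule, let `A = T/(p i)` with the induced grading, and let `(B, φ)` be
a `σ`-twist of `A`.  Let `κ : T → T` be the linear map multiplying each monomial by
the corresponding cocycle scalars.  Then `B` has the presentation `T/(κ(p i))`, via an
isomorphism sending the class of `x_j` to `φ(x̄_j)`.  Moreover, if `G` is abelian and
`x_i`, `x_j` commute in `A`, then `φ(x̄_i)·φ(x̄_j) = b_σ(g_i,g_j)·φ(x̄_j)·φ(x̄_i)`. -/
theorem presentation_theorem_group_algebra_case
    (σ : G → G → kˣ) (hσ : IsTwoCocycle σ) (gdeg : Fin n → G)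
    {I : Type*} (p : I → FreeAlgebra k (Fin n))
    -- the span of the `p i` is a `G`-graded submodule of `T`
    (hp : Submodule.span k (Set.range p) =
      ⨆ g : G, Submodule.span k (Set.range p) ⊓ freeGrading k gdeg g)
    -- the linear map `κ`
    (κ : FreeAlgebra k (Fin n) →ₗ[k] FreeAlgebra k (Fin n))
    (hκ1 : κ 1 = ((σ 1 1 : kˣ) : k) • 1)
    (hκmon : ∀ (i : Fin n) (w : List (Fin n)),
      κ (freeMonomial k (i :: w)) =
        ((kappaCoef σ gdeg (gdeg i) w : kˣ) : k) • freeMonomial k (i :: w))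
    -- the `σ`-twist `(B, φ)` of `A = T/(p i)`
    (B : Type*) [Ring B] [Algebra k B]
    (φ : RingQuot (presentationRel p) ≃ₗ[k] B)
    (hφ : ∀ (g h : G) (a b : RingQuot (presentationRel p)),
      a ∈ Submodule.map (RingQuot.mkAlgHom k (presentationRel p)).toLinearMap
            (freeGrading k gdeg g) →
      b ∈ Submodule.map (RingQuot.mkAlgHom k (presentationRel p)).toLinearMap
            (freeGrading k gdeg h) →
      φ a * φ b = ((σ g h : kˣ) : k) • φ (a * b)) :
    (∃ ψ : RingQuot (presentationRel (fun i => κ (p i))) ≃ₐ[k] B,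
      ∀ j : Fin n,
        ψ (RingQuot.mkAlgHom k (presentationRel (fun i => κ (p i))) (FreeAlgebra.ι k j)) =
          φ (RingQuot.mkAlgHom k (presentationRel p) (FreeAlgebra.ι k j))) ∧
    (∀ i j : Fin n, i ≠ j → (∀ a b : G, a * b = b * a) →
      RingQuot.mkAlgHom k (presentationRel p) (FreeAlgebra.ι k i) *
          RingQuot.mkAlgHom k (presentationRel p) (FreeAlgebra.ι k j) =
        RingQuot.mkAlgHom k (presentationRel p) (FreeAlgebra.ι k j) *
          RingQuot.mkAlgHom k (presentationRel p) (FreeAlgebra.ι k i) →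
      φ (RingQuot.mkAlgHom k (presentationRel p) (FreeAlgebra.ι k i)) *
          φ (RingQuot.mkAlgHom k (presentationRel p) (FreeAlgebra.ι k j)) =
        ((σ (gdeg i) (gdeg j) * (σ (gdeg j) (gdeg i))⁻¹ : kˣ) : k) •
          (φ (RingQuot.mkAlgHom k (presentationRel p) (FreeAlgebra.ι k j)) *
            φ (RingQuot.mkAlgHom k (presentationRel p) (FreeAlgebra.ι k i)))) := by
  have hκ (w : List (Fin n)) : κ (freeMonomial k w) = wordScalar σ gdeg w • freeMonomial k w := by
    cases w with
    | nil => simpa [freeMonomial, wordScalar, kappaCoef, Units.smul_def] using hκ1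
    | cons i w => rw [hκmon, hσ.wordScalar_cons, Units.smul_def]
  have hκι (j : Fin n) : κ (FreeAlgebra.ι k j) = FreeAlgebra.ι k j := by
    simpa [kappaCoef, freeMonomial_singleton] using hκmon j []
  have hker' : LinearMap.ker (RingQuot.mkAlgHom k (presentationRel fun i => κ (p i))).toLinearMap =
      ⊤ * (Submodule.span k (Set.range p)).map κ * ⊤ := by
    rw [ker_mkAlgHom_presentationRel, Submodule.map_span, ← Set.range_comp, Function.comp_def]
  obtain ⟨⟨ψ, hψ⟩, hcomm⟩ := presentation_theorem_group_algebra_case_general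
    (freeGrading_mul_le gdeg) (iSup_freeGrading gdeg) hp (isTwistMap_of_map_freeMonomial hσ hκ)
    (bijective_of_map_freeMonomial hκ) (RingQuot.mkAlgHom_surjective k _)
    (ker_mkAlgHom_presentationRel p) (RingQuot.mkAlgHom_surjective k _) hker' φ hφ
  exact ⟨⟨ψ, fun j => by rw [← hψ, hκι]⟩, fun i j _ _ hij =>
    hcomm (ι_mem_freeGrading gdeg i) (ι_mem_freeGrading gdeg j) hij⟩

end
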